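/- Let (Ω,P,π) be a finite irreducible Markov chain (reversibility is not assumed). Then for every natural number t, every real 0 < s ≤ √t and every probability measure μ on Ω: d_c(t + s√t, μ) ≤ d_L(2t, μ) + e^{−s²/2}. -/

import Mathlib

open Matrix Filter Asymptotics

/-- `P` is a stochastic matrix. -/
def IsStochastic {Ω : Type*} [Fintype Ω] (P : Matrix Ω Ω ℝ) : Prop :=
  (∀ x y, 0 ≤ P x y) ∧ ∀ x, ∑ y, P x y = 1

/-- `P` is irreducible. -/
def IsIrreducibleMatrix {Ω : Type*} [Fintype Ω] [DecidableEq Ω] (P : Matrix Ω Ω ℝ) : Prop :=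
  ∀ x y, ∃ n : ℕ, 0 < (P ^ n) x y

/-- `μ` is a probability vector. -/
def IsProbVec {Ω : Type*} [Fintype Ω] (μ : Ω → ℝ) : Prop :=
  (∀ x, 0 ≤ μ x) ∧ ∑ x, μ x = 1

/-- The chain `(P, pi)` is reversible. -/
def IsReversible {Ω : Type*} [Fintype Ω] (P : Matrix Ω Ω ℝ) (pi : Ω → ℝ) : Prop :=
  ∀ x y, pi x * P x y = pi y * P y x

/-- A finite irreducible Markov chain `P` with stationary distribution `pi`. -/
def IsMC {Ω : Type*} [Fintype Ω] [DecidableEq Ω] (P : Matrix Ω Ω ℝ) (pi : Ω → ℝ) : Prop :=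
  IsStochastic P ∧ IsIrreducibleMatrix P ∧ IsProbVec pi ∧ pi ᵥ* P = pi

/-- A finite irreducible reversible Markov chain `P` with stationary distribution `pi`. -/
def IsRevMC {Ω : Type*} [Fintype Ω] [DecidableEq Ω] (P : Matrix Ω Ω ℝ) (pi : Ω → ℝ) : Prop :=
  IsMC P pi ∧ IsReversible P pi

/-- Total-variation distance between two measures on a finite set. -/
noncomputable def tvDist {Ω : Type*} [Fintype Ω] (μ ν : Ω → ℝ) : ℝ :=
  (∑ x, |μ x - ν x|) / 2

/-- The lazy version `(I + P)/2` of `P`. -/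
noncomputable def lazyM {Ω : Type*} [Fintype Ω] [DecidableEq Ω] (P : Matrix Ω Ω ℝ) :
    Matrix Ω Ω ℝ :=
  (2 : ℝ)⁻¹ • (1 + P)

/-- `d_c(t, μ)`: TV distance from stationarity of the continuous-time chain at time `t`,
started from `μ`. -/
noncomputable def contDist {Ω : Type*} [Fintype Ω] [DecidableEq Ω] (P : Matrix Ω Ω ℝ) (pi : Ω → ℝ)
    (t : ℝ) (μ : Ω → ℝ) : ℝ :=
  tvDist (fun y => ∑' k : ℕ, Real.exp (-t) * t ^ k / (Nat.factorial k) * (μ ᵥ* (P ^ k)) y) pi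

/-- `d_L(t, μ)`: TV distance from stationarity of the lazy chain at (discrete) time `t`,
started from `μ`. -/
noncomputable def lazyDist {Ω : Type*} [Fintype Ω] [DecidableEq Ω] (P : Matrix Ω Ω ℝ)
    (pi : Ω → ℝ) (t : ℝ) (μ : Ω → ℝ) : ℝ :=
  tvDist (μ ᵥ* (lazyM P ^ ⌊t⌋₊)) pi

/-- `d_ave(t, μ)`: TV distance from stationarity of the averaged chain at (discrete) time `t`,
started from `μ`. -/
noncomputable def aveDist {Ω : Type*} [Fintype Ω] [DecidableEq Ω] (P : Matrix Ω Ω ℝ) (pi : Ω → ℝ)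
    (t : ℝ) (μ : Ω → ℝ) : ℝ :=
  tvDist (fun y => ((μ ᵥ* (P ^ ⌊t⌋₊)) y + (μ ᵥ* (P ^ (⌊t⌋₊ + 1))) y) / 2) pi

/-- The point mass at `x`. -/
noncomputable def deltaMass {Ω : Type*} [DecidableEq Ω] (x : Ω) : Ω → ℝ :=
  fun y => if y = x then 1 else 0

/-- Worst-case continuous-time distance `d_c(t)`. -/
noncomputable def contDistMax {Ω : Type*} [Fintype Ω] [DecidableEq Ω] (P : Matrix Ω Ω ℝ)
    (pi : Ω → ℝ) (t : ℝ) : ℝ :=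
  ⨆ x : Ω, contDist P pi t (deltaMass x)

/-- Worst-case lazy distance `d_L(t)`. -/
noncomputable def lazyDistMax {Ω : Type*} [Fintype Ω] [DecidableEq Ω] (P : Matrix Ω Ω ℝ)
    (pi : Ω → ℝ) (t : ℝ) : ℝ :=
  ⨆ x : Ω, lazyDist P pi t (deltaMass x)

/-- Worst-case averaged distance `d_ave(t)`. -/
noncomputable def aveDistMax {Ω : Type*} [Fintype Ω] [DecidableEq Ω] (P : Matrix Ω Ω ℝ)
    (pi : Ω → ℝ) (t : ℝ) : ℝ :=
  ⨆ x : Ω, aveDist P pi t (deltaMass x)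

/-- `φ_{α,C}(t) = t + ⌈C t^{(1+2α)/2} √(α log t)⌉`. -/
noncomputable def phiAC (α C t : ℝ) : ℝ :=
  t + ((⌈C * t ^ ((1 + 2 * α) / 2) * Real.sqrt (α * Real.log t)⌉ : ℤ) : ℝ)

/-- `ψ_{α,C}(x) = min (1, x + C |log(2x)|^{-α})`. -/
noncomputable def psiAC (α C x : ℝ) : ℝ :=
  min 1 (x + C * |Real.log (2 * x)| ^ (-α))

/-- `t_c(ε)`, the `ε`-mixing time of the continuous-time chain. -/
noncomputable def contMix {Ω : Type*} [Fintype Ω] [DecidableEq Ω] (P : Matrix Ω Ω ℝ)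
    (pi : Ω → ℝ) (ε : ℝ) : ℝ :=
  sInf {t : ℝ | 0 ≤ t ∧ contDistMax P pi t ≤ ε}

/-- `t_L(ε)`, the `ε`-mixing time of the lazy chain. -/
noncomputable def lazyMix {Ω : Type*} [Fintype Ω] [DecidableEq Ω] (P : Matrix Ω Ω ℝ)
    (pi : Ω → ℝ) (ε : ℝ) : ℕ :=
  sInf {t : ℕ | lazyDistMax P pi t ≤ ε}

/-- `t_ave(ε)`, the `ε`-mixing time of the averaged chain. -/
noncomputable def aveMix {Ω : Type*} [Fintype Ω] [DecidableEq Ω] (P : Matrix Ω Ω ℝ)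
    (pi : Ω → ℝ) (ε : ℝ) : ℕ :=
  sInf {t : ℕ | aveDistMax P pi t ≤ ε}

/-!
Since `2r ((I + P)/2 - I) = r (P - I)`, the continuous-time chain at time `r` is the lazy chain
observed at an independent Poisson time `N` of mean `2r`. Convexity of the total-variation distance
bounds `d_c(r, μ)` by the mean of `d_L(N, μ)`, and as `d_L(·, μ)` is nonincreasing and at most `1`,
this mean is at most `d_L(n, μ) + ℙ(N < n)`. For `n = 2t` and `r = t + s√t` the mean of `N` is
`n (1 + s/√t)`, and Chernoff's inequality gives `ℙ(N < n) ≤ e^{-s²/2}`.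
-/

open MeasureTheory ProbabilityTheory
open scoped NNReal Nat

section PoissonTail

/-- Chernoff's method with the weights `θ ^ (n - k)`, which are at least `1` for `k < n`. -/
lemma poissonMeasure_real_Iio_le (n : ℕ) {θ : ℝ≥0} (hθ : 1 ≤ θ) :
    Po(n * θ).real (Set.Iio n) ≤ (θ * Real.exp (1 - θ)) ^ n := by
  have hθ' : (1 : ℝ) ≤ θ := hθ
  calc Po(n * θ).real (Set.Iio n)
      = ∑ k ∈ Finset.range n, Real.exp (-(n * θ)) * (n * θ) ^ k / k ! := by
        rw [← Finset.coe_range, ← sum_measureReal_singleton]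
        simp only [poissonMeasure_real_singleton, NNReal.coe_mul, NNReal.coe_natCast]
    _ ≤ ∑ k ∈ Finset.range n, Real.exp (-(n * θ)) * θ ^ n * (n ^ k / k !) := by
        refine Finset.sum_le_sum fun k hk => ?_
        rw [mul_pow, mul_div_assoc, mul_comm ((n : ℝ) ^ k), mul_div_assoc, ← mul_assoc]
        gcongr
        exact (Finset.mem_range.1 hk).le
    _ ≤ Real.exp (-(n * θ)) * θ ^ n * Real.exp n := by
        rw [← Finset.mul_sum]
        gcongr
        exact Real.sum_le_exp_of_nonneg n.cast_nonneg n
    _ = (θ * Real.exp (1 - θ)) ^ n := by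
        rw [mul_pow, ← Real.exp_nat_mul, mul_right_comm, ← Real.exp_add, mul_comm]
        ring_nf

lemma one_add_le_exp_sub_sq_div_four {u : ℝ} (hu₀ : 0 ≤ u) (hu₁ : u ≤ 1) :
    1 + u ≤ Real.exp (u - u ^ 2 / 4) := by
  have hv : 0 ≤ u - u ^ 2 / 4 := by nlinarith
  calc 1 + u ≤ 1 + (u - u ^ 2 / 4) + (u - u ^ 2 / 4) ^ 2 / 2 := by
        have h : 1 / 2 ≤ (1 - u / 4) ^ 2 := by nlinarith
        linarith [mul_le_mul_of_nonneg_left h (sq_nonneg u)]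
    _ ≤ Real.exp (u - u ^ 2 / 4) := Real.quadratic_le_exp_of_nonneg hv

lemma poissonMeasure_real_Iio_le_exp (n : ℕ) {u : ℝ≥0} (hu : u ≤ 1) :
    Po(n * (1 + u)).real (Set.Iio n) ≤ Real.exp (-(n * u ^ 2 / 4)) := by
  calc Po(n * (1 + u)).real (Set.Iio n)
      ≤ ((1 + u) * Real.exp (-u)) ^ n := by
        simpa using poissonMeasure_real_Iio_le n (le_add_of_nonneg_right u.2 : 1 ≤ 1 + u)
    _ ≤ (Real.exp (u - u ^ 2 / 4) * Real.exp (-u)) ^ n := by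
        gcongr
        exact one_add_le_exp_sub_sq_div_four u.2 hu
    _ = Real.exp (-(n * u ^ 2 / 4)) := by
        rw [← Real.exp_add, ← Real.exp_nat_mul]
        ring_nf

end PoissonTail

lemma integral_le_add_measureReal_Iio {ι : Type*} [LinearOrder ι] [TopologicalSpace ι]
    [OrderClosedTopology ι] [MeasurableSpace ι] [OpensMeasurableSpace ι] {m : Measure ι}
    [IsProbabilityMeasure m] {f : ι → ℝ} (hf : Antitone f) (hf₀ : ∀ i, 0 ≤ f i)
    (hf₁ : ∀ i, f i ≤ 1) (hfm : Integrable f m) (j : ι) :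
    ∫ i, f i ∂m ≤ f j + m.real (Set.Iio j) := by
  have hind : Integrable ((Set.Iio j).indicator (1 : ι → ℝ)) m :=
    (integrable_const 1).indicator measurableSet_Iio
  calc ∫ i, f i ∂m ≤ ∫ i, (f j + (Set.Iio j).indicator 1 i) ∂m := by
        refine integral_mono hfm ((integrable_const _).add hind) fun i => ?_
        rcases lt_or_ge i j with hij | hij
        · simpa [hij] using (hf₁ i).trans (le_add_of_nonneg_left (hf₀ j))
        · simpa [hij.not_gt] using hf hij
    _ = f j + m.real (Set.Iio j) := by
        rw [integral_add (integrable_const _) hind, integral_indicator_one measurableSet_Iio]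
        simp

section TotalVariation

variable {Ω : Type*} [Fintype Ω]

lemma tvDist_nonneg (μ ν : Ω → ℝ) : 0 ≤ tvDist μ ν := by
  unfold tvDist
  positivity

lemma IsProbVec.tvDist_le_one {μ ν : Ω → ℝ} (hμ : IsProbVec μ) (hν : IsProbVec ν) :
    tvDist μ ν ≤ 1 := by
  have h : ∑ x, |μ x - ν x| ≤ 2 :=
    calc ∑ x, |μ x - ν x| ≤ ∑ x, (μ x + ν x) := by
          gcongr with x
          simpa [abs_of_nonneg (hμ.1 x), abs_of_nonneg (hν.1 x)] using abs_sub (μ x) (ν x)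
      _ = 2 := by rw [Finset.sum_add_distrib, hμ.2, hν.2, one_add_one_eq_two]
  unfold tvDist
  linarith

lemma tvDist_integral_le {ι : Type*} [MeasurableSpace ι] (m : Measure ι) [IsProbabilityMeasure m]
    {ν : ι → Ω → ℝ} (hν : ∀ x, Integrable (fun i => ν i x) m) (ρ : Ω → ℝ) :
    tvDist (fun x => ∫ i, ν i x ∂m) ρ ≤ ∫ i, tvDist (ν i) ρ ∂m := by
  have hsub (x : Ω) : Integrable (fun i => ν i x - ρ x) m := (hν x).sub (integrable_const _)
  unfold tvDist
  rw [integral_div, integral_finsetSum _ fun x _ => (hsub x).abs]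
  gcongr with x
  calc |∫ i, ν i x ∂m - ρ x| = |∫ i, (ν i x - ρ x) ∂m| := by
        rw [integral_sub (hν x) (integrable_const _)]
        simp
    _ ≤ ∫ i, |ν i x - ρ x| ∂m := abs_integral_le_integral_abs

lemma integrable_tvDist {ι : Type*} [MeasurableSpace ι] {m : Measure ι} [IsFiniteMeasure m]
    {ν : ι → Ω → ℝ} (hν : ∀ x, Integrable (fun i => ν i x) m) (ρ : Ω → ℝ) :
    Integrable (fun i => tvDist (ν i) ρ) m :=
  (integrable_finsetSum _ fun x _ => ((hν x).sub (integrable_const _)).abs).div_const 2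

lemma IsStochastic.tvDist_vecMul_le {P : Matrix Ω Ω ℝ} (hP : IsStochastic P) (μ ν : Ω → ℝ) :
    tvDist (μ ᵥ* P) (ν ᵥ* P) ≤ tvDist μ ν := by
  unfold tvDist
  gcongr ?_ / 2
  calc ∑ y, |(μ ᵥ* P) y - (ν ᵥ* P) y| ≤ ∑ y, ∑ x, |μ x - ν x| * P x y := by
        gcongr with y
        simp only [vecMul, dotProduct, ← Finset.sum_sub_distrib, ← sub_mul]
        refine (Finset.abs_sum_le_sum_abs _ _).trans_eq (Finset.sum_congr rfl fun x _ => ?_)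
        rw [abs_mul, abs_of_nonneg (hP.1 x y)]
    _ = ∑ x, |μ x - ν x| := by
        rw [Finset.sum_comm]
        simp only [← Finset.mul_sum, hP.2, mul_one]

lemma IsStochastic.antitone_tvDist_vecMul_pow [DecidableEq Ω] {P : Matrix Ω Ω ℝ}
    (hP : IsStochastic P) {pi : Ω → ℝ} (hpi : pi ᵥ* P = pi) (μ : Ω → ℝ) :
    Antitone fun k : ℕ => tvDist (μ ᵥ* P ^ k) pi := by
  refine antitone_nat_of_succ_le fun k => ?_
  calc tvDist (μ ᵥ* P ^ (k + 1)) pi = tvDist ((μ ᵥ* P ^ k) ᵥ* P) (pi ᵥ* P) := by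
        rw [hpi, vecMul_vecMul, ← pow_succ]
    _ ≤ tvDist (μ ᵥ* P ^ k) pi := hP.tvDist_vecMul_le _ _

end TotalVariation

section LazyChain

variable {Ω : Type*} [Fintype Ω] [DecidableEq Ω] {P : Matrix Ω Ω ℝ}

lemma IsStochastic.lazyM (hP : IsStochastic P) : IsStochastic (lazyM P) := by
  have hmem : (2 : ℝ)⁻¹ • 1 + (2 : ℝ)⁻¹ • P ∈ rowStochastic ℝ Ω :=
    convex_rowStochastic (one_mem _) (mem_rowStochastic_iff_sum.2 hP) (by norm_num) (by norm_num)
      (by norm_num)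
  rw [← smul_add] at hmem
  exact mem_rowStochastic_iff_sum.1 hmem

lemma vecMul_lazyM_of_vecMul_eq {ν : Ω → ℝ} (hν : ν ᵥ* P = ν) : ν ᵥ* lazyM P = ν := by
  rw [lazyM, vecMul_smul, vecMul_add, vecMul_one, hν, ← two_smul ℝ ν, inv_smul_smul₀ two_ne_zero]

end LazyChain

lemma hasSum_poisson_smul_pow {A : Type*} [NormedRing A] [NormedAlgebra ℝ A] [CompleteSpace A]
    (a : A) (t : ℝ) :
    HasSum (fun k : ℕ => (Real.exp (-t) * t ^ k / k !) • a ^ k)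
      (NormedSpace.exp (t • (a - 1))) := by
  let _ : NormedAlgebra ℚ A := .restrictScalars ℚ ℝ A
  have hexp : NormedSpace.exp (t • (a - 1)) = Real.exp (-t) • NormedSpace.exp (t • a) := by
    rw [smul_sub, sub_eq_neg_add, ← neg_smul, ← Algebra.algebraMap_eq_smul_one,
      NormedSpace.exp_add_of_commute (Algebra.commute_algebraMap_left _ _),
      ← NormedSpace.algebraMap_exp_comm, ← Real.exp_eq_exp_ℝ, ← Algebra.smul_def]
  rw [hexp]
  convert! (NormedSpace.exp_series_hasSum_exp' (𝕂 := ℝ) (t • a)).const_smul (Real.exp (-t)) using 2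
    with k
  rw [smul_pow, smul_smul, smul_smul]
  ring_nf

section ContinuousTime

variable {Ω : Type*} [Fintype Ω] [DecidableEq Ω]

/-- The transition matrix `H_t = e^{t(P - I)}` at time `t` of the continuous-time chain which jumps
according to `P` at rate `1`; written as a matrix exponential so that `heatKernel_lazyM` is a
matter of rescaling time. -/
noncomputable def heatKernel (P : Matrix Ω Ω ℝ) (t : ℝ) : Matrix Ω Ω ℝ :=
  NormedSpace.exp (t • (P - 1))

lemma heatKernel_lazyM (P : Matrix Ω Ω ℝ) (t : ℝ) :
    heatKernel (lazyM P) (2 * t) = heatKernel P t := by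
  unfold heatKernel lazyM
  congr 1
  module

lemma hasSum_poisson_vecMul_pow (P : Matrix Ω Ω ℝ) (t : ℝ) (μ : Ω → ℝ) (y : Ω) :
    HasSum (fun k : ℕ => Real.exp (-t) * t ^ k / k ! * (μ ᵥ* P ^ k) y)
      ((μ ᵥ* heatKernel P t) y) := by
  have hker : HasSum (fun k : ℕ => (Real.exp (-t) * t ^ k / k !) • P ^ k) (heatKernel P t) :=
    open scoped Matrix.Norms.Operator in hasSum_poisson_smul_pow P t
  have hcont : Continuous (vecMulBilin ℝ ℝ μ : Matrix Ω Ω ℝ →ₗ[ℝ] Ω → ℝ) :=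
    continuous_const.matrix_vecMul continuous_id
  simpa only [Function.comp_def, map_smul, vecMulBilin_apply, Pi.smul_apply, smul_eq_mul] using
    Pi.hasSum.1 (hker.map (vecMulBilin ℝ ℝ μ) hcont) y

lemma integrable_vecMul_pow_poissonMeasure (P : Matrix Ω Ω ℝ) (r : ℝ≥0) (μ : Ω → ℝ) (y : Ω) :
    Integrable (fun k : ℕ => (μ ᵥ* P ^ k) y) Po(r) := by
  rw [integrable_poissonMeasure_iff]
  refine (hasSum_poisson_vecMul_pow P r μ y).summable.abs.congr fun k => ?_
  rw [abs_mul, abs_of_nonneg (by positivity), Real.norm_eq_abs]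

lemma contDist_eq_tvDist_heatKernel (P : Matrix Ω Ω ℝ) (pi : Ω → ℝ) (t : ℝ) (μ : Ω → ℝ) :
    contDist P pi t μ = tvDist (μ ᵥ* heatKernel P t) pi :=
  congrArg (tvDist · pi) (funext fun y => (hasSum_poisson_vecMul_pow P t μ y).tsum_eq)

lemma contDist_lazyM (P : Matrix Ω Ω ℝ) (pi : Ω → ℝ) (t : ℝ) (μ : Ω → ℝ) :
    contDist (lazyM P) pi (2 * t) μ = contDist P pi t μ := by
  rw [contDist_eq_tvDist_heatKernel, heatKernel_lazyM, ← contDist_eq_tvDist_heatKernel]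

lemma contDist_le_integral_tvDist (P : Matrix Ω Ω ℝ) (pi : Ω → ℝ) (r : ℝ≥0) (μ : Ω → ℝ) :
    contDist P pi r μ ≤ ∫ k, tvDist (μ ᵥ* P ^ k) pi ∂Po(r) := by
  calc contDist P pi r μ = tvDist (fun y => ∫ k, (μ ᵥ* P ^ k) y ∂Po(r)) pi := by
        simp only [contDist, integral_poissonMeasure, smul_eq_mul]
    _ ≤ ∫ k, tvDist (μ ᵥ* P ^ k) pi ∂Po(r) :=
        tvDist_integral_le Po(r) (integrable_vecMul_pow_poissonMeasure P r μ) pi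

lemma IsStochastic.contDist_le_add_poissonMeasure {P : Matrix Ω Ω ℝ} (hP : IsStochastic P)
    {pi μ : Ω → ℝ} (hpi : IsProbVec pi) (hst : pi ᵥ* P = pi) (hμ : IsProbVec μ) (r : ℝ≥0) (n : ℕ) :
    contDist P pi r μ ≤ tvDist (μ ᵥ* P ^ n) pi + Po(r).real (Set.Iio n) := by
  have hanti := hP.antitone_tvDist_vecMul_pow hst μ
  have hle (k : ℕ) : tvDist (μ ᵥ* P ^ k) pi ≤ 1 :=
    (hanti k.zero_le).trans (by simpa using hμ.tvDist_le_one hpi)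
  exact (contDist_le_integral_tvDist P pi r μ).trans <|
    integral_le_add_measureReal_Iio hanti (fun _ => tvDist_nonneg _ _) hle
      (integrable_tvDist (integrable_vecMul_pow_poissonMeasure P r μ) pi) n

theorem cont_dist_le_lazy_dist_general {P : Matrix Ω Ω ℝ} (hP : IsStochastic P) {pi : Ω → ℝ}
    (hpi : IsProbVec pi) (hst : pi ᵥ* P = pi) (t : ℕ) {s : ℝ} (hs₀ : 0 ≤ s) (hs : s ≤ √t)
    {μ : Ω → ℝ} (hμ : IsProbVec μ) :
    contDist P pi (t + s * √t) μ ≤ lazyDist P pi (2 * t) μ + Real.exp (-s ^ 2 / 2) := by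
  obtain ⟨u, hu, rfl⟩ : ∃ u : ℝ≥0, u ≤ 1 ∧ s = u * √t :=
    ⟨⟨s / √t, by positivity⟩, div_le_one_of_le₀ hs (Real.sqrt_nonneg _),
      (div_mul_cancel_of_imp fun h => le_antisymm (h ▸ hs) hs₀).symm⟩
  have hsq : √(t : ℝ) * √t = t := Real.mul_self_sqrt t.cast_nonneg
  calc contDist P pi (t + u * √t * √t) μ
      = contDist (lazyM P) pi ((2 * t : ℕ) * (1 + u) : ℝ≥0) μ := by
        rw [← contDist_lazyM, mul_assoc, hsq]
        push_cast
        ring_nf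
    _ ≤ tvDist (μ ᵥ* lazyM P ^ (2 * t)) pi + Po((2 * t : ℕ) * (1 + u)).real (Set.Iio (2 * t)) :=
        hP.lazyM.contDist_le_add_poissonMeasure hpi (vecMul_lazyM_of_vecMul_eq hst) hμ _ _
    _ ≤ tvDist (μ ᵥ* lazyM P ^ (2 * t)) pi + Real.exp (-((2 * t : ℕ) * u ^ 2 / 4)) := by
        gcongr
        exact poissonMeasure_real_Iio_le_exp _ hu
    _ = lazyDist P pi (2 * t) μ + Real.exp (-(u * √t) ^ 2 / 2) := by
        have hfloor : ⌊2 * (t : ℝ)⌋₊ = 2 * t := mod_cast Nat.floor_natCast (R := ℝ) (2 * t)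
        rw [lazyDist, hfloor, mul_pow, sq √(t : ℝ), hsq]
        push_cast
        ring_nf

end ContinuousTime

/-- **Proposition 1.8 (eq. (11)) of Hermon–Peres.**
For every finite irreducible Markov chain (no reversibility needed), every `t ∈ ℕ`,
every `0 < s ≤ √t` and every initial distribution `μ`,
`d_c(t + s√t, μ) ≤ d_L(2t, μ) + e^{-s²/2}`. -/
theorem cont_dist_le_lazy_dist :
    ∀ (Ω : Type) [Fintype Ω] [DecidableEq Ω]
      (P : Matrix Ω Ω ℝ) (pi : Ω → ℝ), IsMC P pi →
      ∀ (t : ℕ) (s : ℝ), 0 < s → s ≤ Real.sqrt t →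
      ∀ μ : Ω → ℝ, IsProbVec μ →
        contDist P pi ((t : ℝ) + s * Real.sqrt t) μ ≤
          lazyDist P pi (2 * (t : ℝ)) μ + Real.exp (-s ^ 2 / 2) :=
  fun _ _ _ _ _ ⟨hP, _, hpi, hst⟩ t _ hs₀ hs _ hμ =>
    cont_dist_le_lazy_dist_general hP hpi hst t hs₀.le hs hμ
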